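/- If the set F of function symbols is finite and the rewriting system R is size-change terminating, then the call relation ≻̃ terminates on ℂ: there is no infinite sequence f₁ t⃗₁ ≻̃ f₂ t⃗₂ ≻̃ … in ℂ. -/

import Mathlib

set_option maxHeartbeats 1000000

/-! # Terms of λΠ/R (de Bruijn representation) -/

inductive Trm (F : Type) : Type
  | type : Trm F
  | kind : Trm F
  | var : ℕ → Trm F
  | sym : F → Trm F
  | pi : Trm F → Trm F → Trm F
  | app : Trm F → Trm F → Trm F
  | lam : Trm F → Trm F → Trm F

namespace Trm

variable {F : Type}

/-- Lifting of a renaming under a binder. -/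
def upRen (ρ : ℕ → ℕ) : ℕ → ℕ
  | 0 => 0
  | n + 1 => ρ n + 1

/-- Renaming of (de Bruijn) variables. -/
def rename (ρ : ℕ → ℕ) : Trm F → Trm F
  | .type => .type
  | .kind => .kind
  | .var n => .var (ρ n)
  | .sym f => .sym f
  | .pi A B => .pi (rename ρ A) (rename (upRen ρ) B)
  | .app t u => .app (rename ρ t) (rename ρ u)
  | .lam A b => .lam (rename ρ A) (rename (upRen ρ) b)

/-- Lifting of a substitution under a binder. -/
def up (σ : ℕ → Trm F) : ℕ → Trm F
  | 0 => .var 0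
  | n + 1 => rename Nat.succ (σ n)

/-- Capture-avoiding (parallel) substitution. -/
def subst (σ : ℕ → Trm F) : Trm F → Trm F
  | .type => .type
  | .kind => .kind
  | .var n => σ n
  | .sym f => .sym f
  | .pi A B => .pi (subst σ A) (subst (up σ) B)
  | .app t u => .app (subst σ t) (subst σ u)
  | .lam A b => .lam (subst σ A) (subst (up σ) b)

/-- Cons of a term on a substitution: `scons a σ` maps `0` to `a` and `n+1` to `σ n`. -/
def scons (a : Trm F) (σ : ℕ → Trm F) : ℕ → Trm F
  | 0 => a
  | n + 1 => σ n

/-- Substitution of the first free variable: `t[x ↦ a]`. -/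
def subst1 (a t : Trm F) : Trm F := subst (scons a .var) t

/-- Shifting of all free variables. -/
def shift : Trm F → Trm F := rename Nat.succ

/-- Application of a head term to a list of arguments: `appList h [t1,…,tn] = h t1 … tn`. -/
def appList (h : Trm F) : List (Trm F) → Trm F
  | [] => h
  | a :: as => appList (.app h a) as

/-- Free (de Bruijn) variables of a term. -/
def FV : Trm F → Set ℕ
  | .type => ∅
  | .kind => ∅
  | .var n => {n}
  | .sym _ => ∅
  | .pi A B => FV A ∪ {n | n + 1 ∈ FV B}
  | .app t u => FV t ∪ FV u
  | .lam A b => FV A ∪ {n | n + 1 ∈ FV b}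

/-- The class 𝕂 of kinds: `K = TYPE | Πx:t.K`. -/
def IsKind : Trm F → Prop
  | .type => True
  | .pi _ B => IsKind B
  | _ => False

/-- Sorts: `TYPE` and `KIND`. -/
def IsSort (s : Trm F) : Prop := s = .type ∨ s = .kind

/-- The product arity of a term: the number of leading products. -/
def piArity : Trm F → ℕ
  | .pi _ B => piArity B + 1
  | _ => 0

/-- Strip `n` leading products. -/
def piCodN : ℕ → Trm F → Trm F
  | 0, T => T
  | n + 1, .pi _ B => piCodN n B
  | _ + 1, T => T

/-- The first `n` domains of the leading products, as a de Bruijn context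
(type of variable `0` first, i.e. innermost first). -/
def teleN : ℕ → Trm F → List (Trm F)
  | 0, _ => []
  | n + 1, .pi A B => teleN n B ++ [A]
  | _ + 1, _ => []

/-- The full telescope of leading products, as a de Bruijn context. -/
def telescope (T : Trm F) : List (Trm F) := teleN (piArity T) T

/-- The domains of the leading products, outermost first. -/
def piDoms : Trm F → List (Trm F)
  | .pi A B => A :: piDoms B
  | _ => []

end Trm

/-- The subterm relation (reflexive and transitive). -/
inductive Subterm {F : Type} : Trm F → Trm F → Prop
  | refl (t : Trm F) : Subterm t t
  | piL {t A B} : Subterm t A → Subterm t (.pi A B)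
  | piR {t A B} : Subterm t B → Subterm t (.pi A B)
  | appL {t u v} : Subterm t u → Subterm t (.app u v)
  | appR {t u v} : Subterm t v → Subterm t (.app u v)
  | lamL {t A b} : Subterm t A → Subterm t (.lam A b)
  | lamR {t A b} : Subterm t b → Subterm t (.lam A b)

/-! # Rewriting -/

/-- A set of rewriting rules `l → r`. -/
abbrev Rules (F : Type) := Set (Trm F × Trm F)

/-- `R` is a rewriting system: for every rule `l → r`, `FV(r) ⊆ FV(l)` and
`l` is of the form `f l⃗`. -/
def IsRewriteSystem {F : Type} (R : Rules F) : Prop :=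
  ∀ p ∈ R, Trm.FV p.2 ⊆ Trm.FV p.1 ∧ ∃ (f : F) (ls : List (Trm F)), p.1 = Trm.appList (.sym f) ls

/-- A symbol is defined if it heads the left-hand side of some rule. -/
def Defined {F : Type} (R : Rules F) (f : F) : Prop :=
  ∃ (ls : List (Trm F)) (r : Trm F), (Trm.appList (.sym f) ls, r) ∈ R

/-- One-step reduction `→ = →β ∪ →R`: β-reduction together with the closure of the
rules of `R` by substitution and context. -/
inductive Red {F : Type} (R : Rules F) : Trm F → Trm F → Prop
  | beta (A b a : Trm F) : Red R (.app (.lam A b) a) (Trm.subst1 a b)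
  | rule {l r : Trm F} (σ : ℕ → Trm F) : (l, r) ∈ R → Red R (Trm.subst σ l) (Trm.subst σ r)
  | appL {t t' u} : Red R t t' → Red R (.app t u) (.app t' u)
  | appR {t u u'} : Red R u u' → Red R (.app t u) (.app t u')
  | piL {A A' B} : Red R A A' → Red R (.pi A B) (.pi A' B)
  | piR {A B B'} : Red R B B' → Red R (.pi A B) (.pi A B')
  | lamL {A A' b} : Red R A A' → Red R (.lam A b) (.lam A' b)
  | lamR {A b b'} : Red R b b' → Red R (.lam A b) (.lam A b')

/-- Multi-step reduction `→*`. -/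
def RedStar {F : Type} (R : Rules F) : Trm F → Trm F → Prop := Relation.ReflTransGen (Red R)

/-- Joinability `↓`. -/
def Joinable {F : Type} (R : Rules F) (t u : Trm F) : Prop :=
  ∃ v, RedStar R t v ∧ RedStar R u v

/-- Local confluence: `← · → ⊆ →* · *←`. -/
def LocallyConfluent {F : Type} (R : Rules F) : Prop :=
  ∀ t u v, Red R t u → Red R t v → Joinable R u v

/-- `t` is strongly normalizing (terminating): no infinite reduction sequence from `t`. -/
def SN {F : Type} (R : Rules F) (t : Trm F) : Prop := Acc (fun a b => Red R b a) t

/-- The set of strongly normalizing terms. -/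
def SNset {F : Type} (R : Rules F) : Set (Trm F) := {t | SN R t}

/-- `t` is in normal form. -/
def NormalForm {F : Type} (R : Rules F) (t : Trm F) : Prop := ∀ u, ¬ Red R t u

/-- Neutral terms: `(λx:A.t)u v⃗`, `x v⃗`, or `f v⃗` where every rule `f l⃗ → r ∈ R`
satisfies `|l⃗| ≤ |v⃗|`. -/
def Neutral {F : Type} (R : Rules F) (t : Trm F) : Prop :=
  (∃ (A b a : Trm F) (vs : List (Trm F)), t = Trm.appList (.app (.lam A b) a) vs) ∨
  (∃ (x : ℕ) (vs : List (Trm F)), t = Trm.appList (.var x) vs) ∨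
  (∃ (f : F) (vs : List (Trm F)), t = Trm.appList (.sym f) vs ∧
    ∀ (ls : List (Trm F)) (r : Trm F), (Trm.appList (.sym f) ls, r) ∈ R → ls.length ≤ vs.length)

/-- Computability predicates: `S ⊆ SN`, `S` is closed under reduction, and `S` contains
every neutral term all of whose one-step reducts are in `S`. -/
def IsCompPred {F : Type} (R : Rules F) (S : Set (Trm F)) : Prop :=
  S ⊆ SNset R ∧ (∀ t ∈ S, ∀ u, Red R t u → u ∈ S) ∧
  (∀ t, Neutral R t → (∀ u, Red R t u → u ∈ S) → t ∈ S)

/-! # Typing: λP extended with function symbols and conversion modulo `→` -/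

/-- The typing rules of λΠ/R: the rules of λP (in de Bruijn presentation) with the extra
rule (fun) `⊢ f : Θ_f` and conversion up to joinability for `→`. -/
inductive Typing {F : Type} (R : Rules F) (Θ sΘ : F → Trm F) :
    List (Trm F) → Trm F → Trm F → Prop
  | ax : Typing R Θ sΘ [] .type .kind
  | var {Γ A s} : Trm.IsSort s → Typing R Θ sΘ Γ A s →
      Typing R Θ sΘ (A :: Γ) (.var 0) (Trm.shift A)
  | weak {Γ A s b B} : Trm.IsSort s → Typing R Θ sΘ Γ A s → Typing R Θ sΘ Γ b B →
      Typing R Θ sΘ (A :: Γ) (Trm.shift b) (Trm.shift B)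
  | prod {Γ A B s} : Trm.IsSort s → Typing R Θ sΘ Γ A .type → Typing R Θ sΘ (A :: Γ) B s →
      Typing R Θ sΘ Γ (.pi A B) s
  | abs {Γ A b B s} : Trm.IsSort s → Typing R Θ sΘ (A :: Γ) b B →
      Typing R Θ sΘ Γ (.pi A B) s → Typing R Θ sΘ Γ (.lam A b) (.pi A B)
  | app {Γ t a A B} : Typing R Θ sΘ Γ t (.pi A B) → Typing R Θ sΘ Γ a A →
      Typing R Θ sΘ Γ (.app t a) (Trm.subst1 a B)
  | conv {Γ a A B s} : Typing R Θ sΘ Γ a A → Joinable R A B → Typing R Θ sΘ Γ B s →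
      Trm.IsSort s → Typing R Θ sΘ Γ a B
  | symb (f : F) : Trm.IsSort (sΘ f) → Typing R Θ sΘ [] (Θ f) (sΘ f) →
      Typing R Θ sΘ [] (.sym f) (Θ f)

/-- `→` preserves typing (subject reduction). -/
def PresTyping {F : Type} (R : Rules F) (Θ sΘ : F → Trm F) : Prop :=
  ∀ Γ t u T, Typing R Θ sΘ Γ t T → Red R t u → Typing R Θ sΘ Γ u T

/-- A substitution `γ` is well-typed from `Δ` to `Γ` (for a generic typing judgment `Ty`):
for all `(x : T) ∈ Δ`, `Ty Γ (xγ) (Tγ)`. -/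
def SubstTyped {F : Type} (Ty : List (Trm F) → Trm F → Trm F → Prop)
    (Γ : List (Trm F)) (γ : ℕ → Trm F) (Δ : List (Trm F)) : Prop :=
  ∀ i A, Δ[i]? = some A → Ty Γ (γ i) (Trm.subst (fun j => γ (j + i + 1)) A)

/-! # Interpretation of types as computability predicates -/

/-- `𝕀`: partial functions from terms to sets of terms. -/
abbrev Interp (F : Type) := Trm F → Part (Set (Trm F))

/-- Graph inclusion of partial functions. -/
def InterpLE {F : Type} (I J : Interp F) : Prop := ∀ T S, S ∈ I T → S ∈ J T

/-- `I` is the least fixpoint of `φ` on `𝕀` (ordered by graph inclusion). -/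
def IsLfpInterp {F : Type} (φ : Interp F → Interp F) (I : Interp F) : Prop :=
  φ I = I ∧ ∀ J, φ J = J → InterpLE I J

/-- The domain `D(I)`: terminating terms `T` such that whenever `T →* Πx:A.B`,
`A ∈ dom(I)` and `B[x↦a] ∈ dom(I)` for all `a ∈ I(A)`. -/
def domD {F : Type} (R : Rules F) (I : Interp F) : Set (Trm F) :=
  {T | SN R T ∧ ∀ A B, RedStar R T (.pi A B) →
    (I A).Dom ∧ ∀ S ∈ I A, ∀ a ∈ S, (I (Trm.subst1 a B)).Dom}

/-- `{t | ∀ a ∈ I(A), t a ∈ I(B[x↦a])}` (relational reading of the partial function `I`). -/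
def piPart {F : Type} (I : Interp F) (A B : Trm F) : Set (Trm F) :=
  {t | ∀ S ∈ I A, ∀ a ∈ S, ∀ S' ∈ I (Trm.subst1 a B), Trm.app t a ∈ S'}

open Classical in
/-- The monotone function `F : 𝕀 → 𝕀`: `dom(F(I)) = D(I)`; `F(I)(T) = SN` if the normal
form of `T` is not a product; `F(I)(T) = {t | ∀ a ∈ I(A), t a ∈ I(B[x↦a])}` if the normal
form of `T` is `Πx:A.B`. -/
noncomputable def interpF {F : Type} (R : Rules F) (I : Interp F) : Interp F := fun T =>
  ⟨T ∈ domD R I, fun _ =>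
    if h : ∃ A B, RedStar R T (.pi A B) ∧ NormalForm R (.pi A B) then
      piPart I h.choose h.choose_spec.choose
    else SNset R⟩

/-- The value of a partial interpretation at `T` (as a set). -/
def partMem {F : Type} (I : Interp F) (T : Trm F) : Set (Trm F) := {t | ∀ S ∈ I T, t ∈ S}

open Classical in
/-- The interpretation `⟦T⟧σ` of a term `T` wrt a substitution `σ`, relative to the least
fixpoint `I = ℐ` of `interpF`: `⟦s⟧σ = 𝒟` for `s` a sort;
`⟦Πx:A.K⟧σ = {t | ∀ a ∈ ⟦A⟧σ, t a ∈ ⟦K⟧[x↦a,σ]}` for `K` a kind;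
`⟦T⟧σ = ℐ(Tσ)` if `T` is neither a kind nor `KIND` and `Tσ ∈ 𝒟`; `⟦T⟧σ = SN` otherwise. -/
noncomputable def interp {F : Type} (R : Rules F) (I : Interp F) :
    Trm F → (ℕ → Trm F) → Set (Trm F)
  | .type, _ => domD R I
  | .kind, _ => domD R I
  | .pi A B, σ =>
      if Trm.IsKind B then
        {t | ∀ a ∈ interp R I A σ, Trm.app t a ∈ interp R I B (Trm.scons a σ)}
      else if Trm.subst σ (.pi A B) ∈ domD R I then partMem I (Trm.subst σ (.pi A B))
      else SNset R
  | .var n, σ =>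
      if Trm.subst σ (.var n) ∈ domD R I then partMem I (Trm.subst σ (.var n)) else SNset R
  | .sym g, σ =>
      if Trm.subst σ (.sym g) ∈ domD R I then partMem I (Trm.subst σ (.sym g)) else SNset R
  | .app t u, σ =>
      if Trm.subst σ (.app t u) ∈ domD R I then partMem I (Trm.subst σ (.app t u)) else SNset R
  | .lam A b, σ =>
      if Trm.subst σ (.lam A b) ∈ domD R I then partMem I (Trm.subst σ (.lam A b)) else SNset R

/-- `σ ⊨ Γ`: a substitution is adequate wrt an environment. -/
def Models {F : Type} (R : Rules F) (I : Interp F) (σ : ℕ → Trm F) (Γ : List (Trm F)) : Prop :=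
  ∀ i A, Γ[i]? = some A → σ i ∈ interp R I A (fun j => σ (j + i + 1))

/-- The typing map `Θ` is adequate: `f ∈ ⟦Θ_f⟧` whenever `⊢ Θ_f : s_f` and `Θ_f ∈ ⟦s_f⟧`. -/
def Adequate {F : Type} (R : Rules F) (Θ sΘ : F → Trm F) (I : Interp F) : Prop :=
  ∀ f : F, Typing R Θ sΘ [] (Θ f) (sΘ f) → Θ f ∈ interp R I (sΘ f) Trm.var →
    Trm.sym f ∈ interp R I (Θ f) Trm.var

/-- The substitution `[x⃗ ↦ l⃗]` (where `ls` lists the images of variables `0, 1, …`). -/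
def mkSubst {F : Type} (ls : List (Trm F)) : ℕ → Trm F := fun i =>
  (ls[i]?).getD (.var (i - ls.length))

/-- Composition of substitutions: `x ↦ (xγ)σ`. -/
def compSubst {F : Type} (γ σ : ℕ → Trm F) : ℕ → Trm F := fun i => Trm.subst σ (γ i)

/-- The set `ℂ` of terms `f t⃗` with `|t⃗| = arit(Θ_f)`, `⊢ Θ_f : s_f`, `Θ_f ∈ ⟦s_f⟧` and
`[x⃗↦t⃗] ⊨ Γ_f`. -/
def CC {F : Type} (R : Rules F) (Θ sΘ : F → Trm F) (I : Interp F) : Set (Trm F) :=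
  {t | ∃ (f : F) (ts : List (Trm F)), t = Trm.appList (.sym f) ts ∧
    ts.length = Trm.piArity (Θ f) ∧
    Typing R Θ sΘ [] (Θ f) (sΘ f) ∧ Θ f ∈ interp R I (sΘ f) Trm.var ∧
    Models R I (mkSubst ts.reverse) (Trm.telescope (Θ f))}

/-! # Dependency pairs -/

/-- Occurrences of `p` in a term, not at the root, such that `p` is not further applied
(i.e. `p` collects all the arguments of its head at this occurrence). -/
inductive MaxOccNR {F : Type} (p : Trm F) : Trm F → Prop
  | appL {u v} : MaxOccNR p u → MaxOccNR p (.app u v)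
  | appR {u v} : MaxOccNR p v → MaxOccNR p (.app u v)
  | appRroot {u} : MaxOccNR p (.app u p)
  | piL {A B} : MaxOccNR p A → MaxOccNR p (.pi A B)
  | piLroot {B} : MaxOccNR p (.pi p B)
  | piR {A B} : MaxOccNR p B → MaxOccNR p (.pi A B)
  | piRroot {A} : MaxOccNR p (.pi A p)
  | lamL {A b} : MaxOccNR p A → MaxOccNR p (.lam A b)
  | lamLroot {b} : MaxOccNR p (.lam p b)
  | lamR {A b} : MaxOccNR p b → MaxOccNR p (.lam A b)
  | lamRroot {A} : MaxOccNR p (.lam A p)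

/-- `p` occurs in `t` as a maximal application. -/
def MaxOcc {F : Type} (p t : Trm F) : Prop := t = p ∨ MaxOccNR p t

/-- Dependency pairs: `f l⃗ > g m⃗` iff there is a rule `f l⃗ → r ∈ R`, `g` is defined and
`g m⃗` is a subterm of `r` such that `m⃗` are all the arguments to which `g` is applied. -/
def DepPair {F : Type} (R : Rules F) (f : F) (ls : List (Trm F)) (g : F)
    (ms : List (Trm F)) : Prop :=
  Defined R g ∧ ∃ r, (Trm.appList (.sym f) ls, r) ∈ R ∧ MaxOcc (Trm.appList (.sym g) ms) r

/-- `f t⃗ →arg f u⃗`: reduction of exactly one argument. -/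
def ArgRed {F : Type} (R : Rules F) (t u : Trm F) : Prop :=
  ∃ (f : F) (pre post : List (Trm F)) (a b : Trm F), Red R a b ∧
    t = Trm.appList (.sym f) (pre ++ a :: post) ∧ u = Trm.appList (.sym f) (pre ++ b :: post)

/-- `>ₛ`: the closure of the dependency pair relation by substitution and left-application:
`f t₁…t_p >ₛ g u₁…u_q` iff there are a dependency pair `f l₁…l_i > g m₁…m_j` with `i ≤ p`
and `j ≤ q` and a substitution `σ` such that `t_k →* l_kσ` for `k ≤ i` and `m_kσ = u_k`
for `k ≤ j`. -/
def GTsub {F : Type} (R : Rules F) (t u : Trm F) : Prop :=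
  ∃ (f g : F) (ts us ls ms : List (Trm F)) (σ : ℕ → Trm F),
    t = Trm.appList (.sym f) ts ∧ u = Trm.appList (.sym g) us ∧
    DepPair R f ls g ms ∧ ls.length ≤ ts.length ∧ ms.length ≤ us.length ∧
    (∀ (k : ℕ) (tk lk : Trm F), ts[k]? = some tk → ls[k]? = some lk → RedStar R tk (Trm.subst σ lk)) ∧
    (∀ (k : ℕ) (mk : Trm F), ms[k]? = some mk → us[k]? = some (Trm.subst σ mk))

/-- The call relation `≻̃ = →arg* · >ₛ` on `ℂ`. -/
def CallRel {F : Type} (R : Rules F) (Θ sΘ : F → Trm F) (I : Interp F) (t u : Trm F) : Prop :=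
  t ∈ CC R Θ sΘ I ∧ u ∈ CC R Θ sΘ I ∧
    ∃ v, Relation.ReflTransGen (ArgRed R) t v ∧ GTsub R v u

/-! # Precedence and well-structured systems -/

/-- `f ⪰ g` (one step): `g` occurs in `Θ_f` or in the right-hand side of a rule of `f`. -/
def PrecBase {F : Type} (R : Rules F) (Θ : F → Trm F) (f g : F) : Prop :=
  Subterm (.sym g) (Θ f) ∨
  ∃ (ls : List (Trm F)) (r : Trm F), (Trm.appList (.sym f) ls, r) ∈ R ∧ Subterm (.sym g) r

/-- `⪰`: the smallest quasi-order containing `PrecBase`. -/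
def Preceq {F : Type} (R : Rules F) (Θ : F → Trm F) : F → F → Prop :=
  Relation.ReflTransGen (PrecBase R Θ)

/-- `≻`: the strict part of `⪰`. -/
def Prec {F : Type} (R : Rules F) (Θ : F → Trm F) (f g : F) : Prop :=
  Preceq R Θ f g ∧ ¬ Preceq R Θ g f

/-- The restricted type system `⊢_{≺ f}`: as `Typing`, but function symbols may only be
introduced when strictly smaller than `f` in the precedence. -/
inductive LTyp {F : Type} (R : Rules F) (Θ sΘ : F → Trm F) (f : F) :
    List (Trm F) → Trm F → Trm F → Prop
  | ax : LTyp R Θ sΘ f [] .type .kind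
  | var {Γ A s} : Trm.IsSort s → LTyp R Θ sΘ f Γ A s →
      LTyp R Θ sΘ f (A :: Γ) (.var 0) (Trm.shift A)
  | weak {Γ A s b B} : Trm.IsSort s → LTyp R Θ sΘ f Γ A s → LTyp R Θ sΘ f Γ b B →
      LTyp R Θ sΘ f (A :: Γ) (Trm.shift b) (Trm.shift B)
  | prod {Γ A B s} : Trm.IsSort s → LTyp R Θ sΘ f Γ A .type → LTyp R Θ sΘ f (A :: Γ) B s →
      LTyp R Θ sΘ f Γ (.pi A B) s
  | abs {Γ A b B s} : Trm.IsSort s → LTyp R Θ sΘ f (A :: Γ) b B →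
      LTyp R Θ sΘ f Γ (.pi A B) s → LTyp R Θ sΘ f Γ (.lam A b) (.pi A B)
  | app {Γ t a A B} : LTyp R Θ sΘ f Γ t (.pi A B) → LTyp R Θ sΘ f Γ a A →
      LTyp R Θ sΘ f Γ (.app t a) (Trm.subst1 a B)
  | conv {Γ a A B s} : LTyp R Θ sΘ f Γ a A → Joinable R A B → LTyp R Θ sΘ f Γ B s →
      Trm.IsSort s → LTyp R Θ sΘ f Γ a B
  | symb (g : F) : Prec R Θ f g → Trm.IsSort (sΘ g) → LTyp R Θ sΘ f [] (Θ g) (sΘ g) →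
      LTyp R Θ sΘ f [] (.sym g) (Θ g)

/-- The arguments `y⃗γ = [y₁γ, …, y_jγ]` of an instantiated dependency pair right-hand
side, where `y_j` is de Bruijn variable `0`. -/
def dpArgs {F : Type} (γ : ℕ → Trm F) (j : ℕ) : List (Trm F) :=
  (List.range j).reverse.map γ

/-- The restricted type system `⊢_{f l⃗}` (computability closure): as `Typing`, except that
types are required to be typable using symbols smaller than `f` only, and function symbols
are introduced either as undefined constants or through instances of dependency pairs of
`f l⃗`. -/
inductive RTyp {F : Type} (R : Rules F) (Θ sΘ : F → Trm F) (f : F) (ls : List (Trm F)) :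
    List (Trm F) → Trm F → Trm F → Prop
  | ax : RTyp R Θ sΘ f ls [] .type .kind
  | var {Γ A s} : Trm.IsSort s → LTyp R Θ sΘ f Γ A s →
      RTyp R Θ sΘ f ls (A :: Γ) (.var 0) (Trm.shift A)
  | weak {Γ A s b B} : Trm.IsSort s → LTyp R Θ sΘ f Γ A s → RTyp R Θ sΘ f ls Γ b B →
      RTyp R Θ sΘ f ls (A :: Γ) (Trm.shift b) (Trm.shift B)
  | prod {Γ A B s} : Trm.IsSort s → RTyp R Θ sΘ f ls Γ A .type →
      RTyp R Θ sΘ f ls (A :: Γ) B s → RTyp R Θ sΘ f ls Γ (.pi A B) s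
  | abs {Γ A b B s} : Trm.IsSort s → RTyp R Θ sΘ f ls (A :: Γ) b B →
      LTyp R Θ sΘ f Γ (.pi A B) s → RTyp R Θ sΘ f ls Γ (.lam A b) (.pi A B)
  | app {Γ t a A B s} : Trm.IsSort s → RTyp R Θ sΘ f ls Γ t (.pi A B) →
      RTyp R Θ sΘ f ls Γ a A → LTyp R Θ sΘ f Γ (.pi A B) s →
      RTyp R Θ sΘ f ls Γ (.app t a) (Trm.subst1 a B)
  | conv {Γ a A B s s'} : Trm.IsSort s → Trm.IsSort s' → RTyp R Θ sΘ f ls Γ a A →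
      Joinable R A B → LTyp R Θ sΘ f Γ B s → LTyp R Θ sΘ f Γ A s' →
      RTyp R Θ sΘ f ls Γ a B
  | dp {Γ : List (Trm F)} (g : F) (γ : ℕ → Trm F) (j : ℕ) :
      j ≤ Trm.piArity (Θ g) → Trm.IsSort (sΘ g) → LTyp R Θ sΘ f [] (Θ g) (sΘ g) →
      (∀ i A, (Trm.teleN j (Θ g))[i]? = some A →
        RTyp R Θ sΘ f ls Γ (γ i) (Trm.subst (fun k => γ (k + i + 1)) A)) →
      DepPair R f ls g (dpArgs γ j) →
      RTyp R Θ sΘ f ls Γ (Trm.appList (.sym g) (dpArgs γ j)) (Trm.subst γ (Trm.piCodN j (Θ g)))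
  | const (g : F) : ¬ Defined R g → Trm.IsSort (sΘ g) → LTyp R Θ sΘ f [] (Θ g) (sΘ g) →
      RTyp R Θ sΘ f ls [] (.sym g) (Θ g)

/-- `R` is well-structured (wrt the assignment `Δ` of an environment to every rule):
(a) `≻` is well-founded; (b) `|l⃗| ≤ arit(Θ_f)` for every rule `f l⃗ → r`;
(c) `|m⃗| ≤ arit(Θ_g)` for every dependency pair `f l⃗ > g m⃗`;
(d) `Δ_{f l⃗→r} ⊢_{f l⃗} r : U[x⃗↦l⃗]` for every rule `f l⃗ → r`, where `Θ_f = Πx⃗:T⃗.U`. -/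
def WellStructured {F : Type} (R : Rules F) (Θ sΘ : F → Trm F)
    (Δ : Trm F → Trm F → List (Trm F)) : Prop :=
  WellFounded (fun g f => Prec R Θ f g) ∧
  (∀ l r, (l, r) ∈ R → ∀ (f : F) ls, l = Trm.appList (.sym f) ls →
    ls.length ≤ Trm.piArity (Θ f)) ∧
  (∀ (f : F) ls (g : F) ms, DepPair R f ls g ms → ms.length ≤ Trm.piArity (Θ g)) ∧
  (∀ l r, (l, r) ∈ R → ∀ (f : F) ls, l = Trm.appList (.sym f) ls →
    RTyp R Θ sΘ f ls (Δ l r) r (Trm.subst (mkSubst ls.reverse) (Trm.piCodN ls.length (Θ f))))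

/-- `R` is accessible: for every rule `f l⃗ → r` with `Θ_f = Πx⃗:T⃗.U`, `|x⃗| = |l⃗|`, and
every substitution `σ`, `σ ⊨ Δ_{f l⃗→r}` whenever `⊢ Θ_f : s_f`, `Θ_f ∈ ⟦s_f⟧` and
`[x⃗↦l⃗]σ ⊨ x⃗:T⃗`. -/
def Accessible {F : Type} (R : Rules F) (Θ sΘ : F → Trm F) (I : Interp F)
    (Δ : Trm F → Trm F → List (Trm F)) : Prop :=
  ∀ l r, (l, r) ∈ R → ∀ (f : F) ls, l = Trm.appList (.sym f) ls → ∀ σ : ℕ → Trm F,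
    Typing R Θ sΘ [] (Θ f) (sΘ f) → Θ f ∈ interp R I (sΘ f) Trm.var →
    Models R I (compSubst (mkSubst ls.reverse) σ) (Trm.teleN ls.length (Θ f)) →
    Models R I σ (Δ l r)

/-- A term in `𝕂 ∪ {KIND}`. -/
def IsKindLike {F : Type} (t : Trm F) : Prop := Trm.IsKind t ∨ t = .kind

/-- `R` is plain function-passing (PFP): for every rule `f l⃗ → r` with `Θ_f = Πx⃗:T⃗.U` and
`|x⃗| = |l⃗|`, no `l_i` is a kind or `KIND`, and every `(y : T) ∈ Δ_{f l⃗→r}` satisfies: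
either there is `i` with `y = l_i` and `T = T_i[x⃗↦l⃗]`, or `y ∈ FV(l_i)` and `T = D t⃗`
with `D` undefined and `|t⃗| = arit(Θ_D)`. -/
def PFP {F : Type} (R : Rules F) (Θ : F → Trm F) (Δ : Trm F → Trm F → List (Trm F)) : Prop :=
  ∀ l r, (l, r) ∈ R → ∀ (f : F) ls, l = Trm.appList (.sym f) ls →
    (∀ li ∈ ls, ¬ IsKindLike li) ∧
    (∀ i A, (Δ l r)[i]? = some A →
      (∃ (k : ℕ) (Tk : Trm F), ls[k]? = some (Trm.var i) ∧ (Trm.piDoms (Θ f))[k]? = some Tk ∧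
        Trm.rename (fun j => j + i + 1) A = Trm.subst (mkSubst ((ls.take k).reverse)) Tk) ∨
      ((∃ (k : ℕ) (lk : Trm F), ls[k]? = some lk ∧ i ∈ Trm.FV lk) ∧
        ∃ (D : F) (ts : List (Trm F)), Trm.rename (fun j => j + i + 1) A =
          Trm.appList (.sym D) ts ∧ ¬ Defined R D ∧ ts.length = Trm.piArity (Θ D)))

/-! # Size-change termination -/

/-- Entries of size-change matrices: `−1`, `0` or `∞`. -/
inductive SCTe : Type
  | minusOne : SCTe
  | zero : SCTe
  | infty : SCTe
deriving DecidableEq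

/-- Min-plus multiplication of entries (addition, truncated at `−1`). -/
def SCTe.comp : SCTe → SCTe → SCTe
  | .infty, _ => .infty
  | _, .infty => .infty
  | .minusOne, _ => .minusOne
  | _, .minusOne => .minusOne
  | .zero, .zero => .zero

/-- Minimum of entries (`−1 < 0 < ∞`). -/
def SCTe.min : SCTe → SCTe → SCTe
  | .minusOne, _ => .minusOne
  | _, .minusOne => .minusOne
  | .zero, _ => .zero
  | .infty, x => x

/-- Base of the relation `⊵`: `f t₁…t_n ⊵ t_i` for `f ∈ F`. -/
def ArgSubBase {F : Type} (t u : Trm F) : Prop :=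
  ∃ (f : F) (ts : List (Trm F)), t = Trm.appList (.sym f) ts ∧ u ∈ ts

/-- `⊵`: the smallest transitive relation such that `f t₁…t_n ⊵ t_i` for `f ∈ F`. -/
def ArgGT {F : Type} : Trm F → Trm F → Prop := Relation.TransGen ArgSubBase

open Classical in
/-- The size-change matrix of a dependency pair `f l₁…l_p > g m₁…m_q`:
`a_{ij} = −1` if `l_i ⊵ m_j`, `a_{ij} = 0` if `l_i = m_j`, `a_{ij} = ∞` otherwise
(in particular if `i > p` or `j > q`). -/
noncomputable def dpMatrix {F : Type} (ls ms : List (Trm F)) : ℕ → ℕ → SCTe := fun i j =>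
  match ls[i]?, ms[j]? with
  | some li, some mj =>
      if ArgGT li mj then .minusOne else if li = mj then .zero else .infty
  | _, _ => .infty

/-- Min-plus product of matrices, the middle dimension being `d`. -/
def matComp (d : ℕ) (M N : ℕ → ℕ → SCTe) : ℕ → ℕ → SCTe := fun i j =>
  ((List.range d).map fun k => (M i k).comp (N k j)).foldr SCTe.min .infty

/-- The transitive closure of the call graph of `R`: edges are labeled by the matrices of
the dependency pairs, multiplied in the min-plus semiring along paths. -/
inductive TCEdge {F : Type} (R : Rules F) (Θ : F → Trm F) : F → F → (ℕ → ℕ → SCTe) → Prop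
  | base {f g : F} {ls ms : List (Trm F)} : DepPair R f ls g ms →
      TCEdge R Θ f g (dpMatrix ls ms)
  | comp {f g h : F} {M N : ℕ → ℕ → SCTe} : TCEdge R Θ f g M → TCEdge R Θ g h N →
      TCEdge R Θ f h (matComp (Trm.piArity (Θ g)) M N)

/-- `R` is size-change terminating: in the transitive closure of the call graph, every
idempotent matrix labeling a loop has some `−1` on its diagonal. -/
def SCT {F : Type} (R : Rules F) (Θ : F → Trm F) : Prop :=
  ∀ (f : F) (M : ℕ → ℕ → SCTe), TCEdge R Θ f f M → matComp (Trm.piArity (Θ f)) M M = M →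
    ∃ i < Trm.piArity (Θ f), M i i = SCTe.minusOne

/-! # Spines -/

namespace Trm

variable {F : Type}

theorem appList_append (h : Trm F) (as bs : List (Trm F)) :
    appList h (as ++ bs) = appList (appList h as) bs := by
  induction as generalizing h with
  | nil => rfl
  | cons a as ih => exact ih _

theorem subst_appList (σ : ℕ → Trm F) (h : Trm F) (as : List (Trm F)) :
    subst σ (appList h as) = appList (subst σ h) (as.map (subst σ)) := by
  induction as generalizing h with
  | nil => rfl
  | cons a as ih => exact ih _

theorem appList_sym_inj {f g : F} {as bs : List (Trm F)}
    (e : appList (.sym f) as = appList (.sym g) bs) : f = g ∧ as = bs := by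
  induction as using List.reverseRecOn generalizing bs with
  | nil =>
    induction bs using List.reverseRecOn with
    | nil => simpa [appList] using e
    | append_singleton bs b _ => simp [appList_append, appList] at e
  | append_singleton as a ih =>
    induction bs using List.reverseRecOn with
    | nil => simp [appList_append, appList] at e
    | append_singleton bs b _ =>
      simp only [appList_append, appList, app.injEq] at e
      obtain ⟨rfl, rfl⟩ := ih e.1
      exact ⟨rfl, by rw [e.2]⟩

theorem length_teleN_piArity (T : Trm F) : (teleN (piArity T) T).length = piArity T := by
  induction T with
  | pi A B _ ih => simp [piArity, teleN, ih]
  | _ => rfl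

end Trm

theorem Subterm.trans {F : Type} {s t u : Trm F} (hst : Subterm s t) (htu : Subterm t u) :
    Subterm s u := by
  induction htu with
  | refl => exact hst
  | piL _ ih => exact .piL ih
  | piR _ ih => exact .piR ih
  | appL _ ih => exact .appL ih
  | appR _ ih => exact .appR ih
  | lamL _ ih => exact .lamL ih
  | lamR _ ih => exact .lamR ih

theorem Subterm.exists_red {F : Type} {R : Rules F} {u u' t : Trm F} (hs : Subterm u t)
    (hr : Red R u u') : ∃ t', Red R t t' ∧ Subterm u' t' := by
  induction hs with
  | refl => exact ⟨u', hr, .refl _⟩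
  | piL _ ih => obtain ⟨t', h, s⟩ := ih; exact ⟨_, .piL h, .piL s⟩
  | piR _ ih => obtain ⟨t', h, s⟩ := ih; exact ⟨_, .piR h, .piR s⟩
  | appL _ ih => obtain ⟨t', h, s⟩ := ih; exact ⟨_, .appL h, .appL s⟩
  | appR _ ih => obtain ⟨t', h, s⟩ := ih; exact ⟨_, .appR h, .appR s⟩
  | lamL _ ih => obtain ⟨t', h, s⟩ := ih; exact ⟨_, .lamL h, .lamL s⟩
  | lamR _ ih => obtain ⟨t', h, s⟩ := ih; exact ⟨_, .lamR h, .lamR s⟩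

theorem subterm_appList_head {F : Type} (h : Trm F) (as : List (Trm F)) :
    Subterm h (Trm.appList h as) ∧ sizeOf h ≤ sizeOf (Trm.appList h as) := by
  induction as generalizing h with
  | nil => exact ⟨.refl _, le_rfl⟩
  | cons a as ih =>
    refine ⟨(Subterm.appL (.refl h)).trans (ih (.app h a)).1, le_trans ?_ (ih (.app h a)).2⟩
    simp only [Trm.app.sizeOf_spec]
    omega

theorem subterm_appList_of_mem {F : Type} (h : Trm F) {a : Trm F} {as : List (Trm F)}
    (ha : a ∈ as) : Subterm a (Trm.appList h as) ∧ sizeOf a < sizeOf (Trm.appList h as) := by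
  induction as generalizing h with
  | nil => simp at ha
  | cons b as ih =>
    rcases List.mem_cons.1 ha with rfl | ha
    · have hh := subterm_appList_head (Trm.app h a) as
      refine ⟨(Subterm.appR (.refl a)).trans hh.1, lt_of_lt_of_le ?_ hh.2⟩
      simp only [Trm.app.sizeOf_spec]
      omega
    · exact ih _ ha

theorem ArgSubBase.subterm {F : Type} {t u : Trm F} (h : ArgSubBase t u) :
    Subterm u t ∧ sizeOf u < sizeOf t := by
  obtain ⟨f, ts, rfl, hu⟩ := h
  exact subterm_appList_of_mem _ hu

theorem ArgGT.subst {F : Type} (σ : ℕ → Trm F) {t u : Trm F} (h : ArgGT t u) :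
    ArgGT (Trm.subst σ t) (Trm.subst σ u) := by
  refine Relation.TransGen.lift (Trm.subst σ) ?_ _ _ h
  rintro _ u ⟨f, ts, rfl, hu⟩
  exact ⟨f, ts.map (Trm.subst σ), Trm.subst_appList _ _ _, List.mem_map_of_mem hu⟩

/-! # Reduction together with the argument relation -/

/-- The union of reduction and of the relation from `f t⃗` to its arguments. -/
def RedOrArg {F : Type} (R : Rules F) (t u : Trm F) : Prop := Red R t u ∨ ArgSubBase t u

theorem RedStar.redOrArg {F : Type} {R : Rules F} {t u : Trm F} (h : RedStar R t u) :
    Relation.ReflTransGen (RedOrArg R) t u :=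
  Relation.ReflTransGen.mono (fun _ _ => Or.inl) _ _ h

theorem ArgGT.redOrArg {F : Type} (R : Rules F) {t u : Trm F} (h : ArgGT t u) :
    Relation.TransGen (RedOrArg R) t u :=
  Relation.TransGen.mono (fun _ _ => Or.inr) _ _ h

theorem SN.acc_redOrArg {F : Type} {R : Rules F} {t : Trm F} (ht : SN R t) :
    Acc (fun a b => RedOrArg R b a) t := by
  suffices ∀ n u, sizeOf u < n → Subterm u t → Acc (fun a b => RedOrArg R b a) u from
    this _ t (Nat.lt_succ_self _) (.refl t)
  induction ht with
  | intro t _ iht =>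
    intro n
    induction n with
    | zero => intro u hu; omega
    | succ n ihn =>
      intro u hu hs
      refine ⟨_, fun v hv => ?_⟩
      rcases hv with hv | hv
      · obtain ⟨t', hr, hs'⟩ := hs.exists_red hv
        exact iht t' hr _ v (Nat.lt_succ_self _) hs'
      · obtain ⟨hvu, hlt⟩ := hv.subterm
        exact ihn v (by omega) (hvu.trans hs)

/-! # Strong normalization of the elements of type interpretations -/

theorem SN.red {F : Type} {R : Rules F} {t u : Trm F} (h : SN R t) (hr : Red R t u) : SN R u :=
  Acc.inv h hr

theorem SN.of_app {F : Type} {R : Rules F} {t a : Trm F} (h : SN R (.app t a)) : SN R t := by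
  generalize e : Trm.app t a = v at h
  induction h generalizing t with
  | intro v _ ih =>
    subst e
    exact ⟨_, fun t' ht' => ih _ (Red.appL ht') rfl⟩

/-- Terms `x v⃗` with `x` a variable and `v⃗` strongly normalizing. -/
inductive VarSpine {F : Type} (R : Rules F) : Trm F → Prop
  | var (n : ℕ) : VarSpine R (.var n)
  | app {t a : Trm F} : VarSpine R t → SN R a → VarSpine R (.app t a)

theorem VarSpine.of_appList {F : Type} {R : Rules F} {h : Trm F} {as : List (Trm F)}
    (hv : VarSpine R (Trm.appList h as)) : VarSpine R h := by
  induction as generalizing h with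
  | nil => exact hv
  | cons a as ih => cases ih hv with | app h _ => exact h

theorem not_varSpine_subst_lhs {F : Type} {R : Rules F} (hRS : IsRewriteSystem R) {l r : Trm F}
    (hlr : (l, r) ∈ R) (σ : ℕ → Trm F) : ¬ VarSpine R (Trm.subst σ l) := by
  obtain ⟨-, f, ls, hl⟩ := hRS _ hlr
  intro hv
  simp only at hl
  rw [hl, Trm.subst_appList] at hv
  cases hv.of_appList

theorem VarSpine.red_app {F : Type} {R : Rules F} (hRS : IsRewriteSystem R) {t a u : Trm F}
    (hv : VarSpine R (.app t a)) (hr : Red R (.app t a) u) :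
    (∃ t', Red R t t' ∧ u = .app t' a) ∨ ∃ a', Red R a a' ∧ u = .app t a' := by
  generalize e : Trm.app t a = v at hr
  cases hr with
  | beta A b c =>
    cases e
    cases hv with | app h _ => cases h
  | rule σ hlr => exact absurd (e ▸ hv) (not_varSpine_subst_lhs hRS hlr σ)
  | appL h => cases e; exact .inl ⟨_, h, rfl⟩
  | appR h => cases e; exact .inr ⟨_, h, rfl⟩
  | _ => cases e

theorem VarSpine.not_red_var {F : Type} {R : Rules F} (hRS : IsRewriteSystem R) {n : ℕ}
    {u : Trm F} : ¬ Red R (.var n) u := by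
  intro hr
  generalize e : Trm.var n = v at hr
  cases hr with
  | rule σ hlr => exact not_varSpine_subst_lhs hRS hlr σ (e ▸ VarSpine.var n)
  | _ => cases e

theorem VarSpine.red {F : Type} {R : Rules F} (hRS : IsRewriteSystem R) {t u : Trm F}
    (hv : VarSpine R t) (hr : Red R t u) : VarSpine R u := by
  induction hv generalizing u with
  | var n => exact absurd hr (not_red_var hRS)
  | app ht ha ih =>
    rcases (VarSpine.app ht ha).red_app hRS hr with ⟨t', h, rfl⟩ | ⟨a', h, rfl⟩
    · exact .app (ih h) ha
    · exact .app ht (ha.red h)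

theorem VarSpine.redStar {F : Type} {R : Rules F} (hRS : IsRewriteSystem R) {t u : Trm F}
    (hv : VarSpine R t) (hr : RedStar R t u) : VarSpine R u := by
  induction hr with
  | refl => exact hv
  | tail _ h ih => exact ih.red hRS h

theorem VarSpine.sn {F : Type} {R : Rules F} (hRS : IsRewriteSystem R) {t : Trm F}
    (hv : VarSpine R t) : SN R t := by
  induction hv with
  | var n => exact ⟨_, fun _ h => absurd h (not_red_var hRS)⟩
  | @app t a ht ha iht =>
    induction iht generalizing a with
    | intro t _ iht =>
      induction ha with
      | intro a hacc iha =>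
        refine ⟨_, fun u hu => ?_⟩
        rcases (VarSpine.app ht ⟨_, hacc⟩).red_app hRS hu with ⟨t', h, rfl⟩ | ⟨a', h, rfl⟩
        · exact iht t' h (ht.red hRS h) ⟨_, hacc⟩
        · exact iha a' h

/-- Sets of strongly normalizing terms that contain all the terms `x v⃗`. -/
def Saturated {F : Type} (R : Rules F) (S : Set (Trm F)) : Prop :=
  S ⊆ SNset R ∧ ∀ t, VarSpine R t → t ∈ S

theorem saturated_SNset {F : Type} {R : Rules F} (hRS : IsRewriteSystem R) :
    Saturated R (SNset R) :=
  ⟨subset_rfl, fun _ h => h.sn hRS⟩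

theorem saturated_domD {F : Type} {R : Rules F} (hRS : IsRewriteSystem R) (I : Interp F) :
    Saturated R (domD R I) := by
  refine ⟨fun t h => h.1, fun t h => ⟨h.sn hRS, fun A B hr => ?_⟩⟩
  cases h.redStar hRS hr

/-- Hereditary membership in the domain of `I`. -/
inductive HeredDom {F : Type} (R : Rules F) (I : Interp F) : Trm F → Prop
  | intro {T : Trm F} :
      (∀ A B, RedStar R T (.pi A B) → HeredDom R I A) →
      (∀ A B, RedStar R T (.pi A B) → ∀ S ∈ I A, ∀ a ∈ S, HeredDom R I (Trm.subst1 a B)) →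
      HeredDom R I T

theorem HeredDom.dom_pi {F : Type} {R : Rules F} {I : Interp F} {T A B : Trm F}
    (h : HeredDom R I T) (hr : RedStar R T (.pi A B)) : HeredDom R I A := by
  cases h with | intro h _ => exact h A B hr

theorem HeredDom.cod_pi {F : Type} {R : Rules F} {I : Interp F} {T A B a : Trm F}
    {S : Set (Trm F)} (h : HeredDom R I T) (hr : RedStar R T (.pi A B)) (hS : S ∈ I A)
    (ha : a ∈ S) : HeredDom R I (Trm.subst1 a B) := by
  cases h with | intro _ h => exact h A B hr S hS a ha

/-- The restriction of `I` to its hereditary domain. -/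
def heredRestrict {F : Type} (R : Rules F) (I : Interp F) : Interp F := fun T =>
  ⟨(I T).Dom ∧ HeredDom R I T, fun h => (I T).get h.1⟩

theorem mem_heredRestrict {F : Type} {R : Rules F} {I : Interp F} {T : Trm F}
    {S : Set (Trm F)} : S ∈ heredRestrict R I T ↔ S ∈ I T ∧ HeredDom R I T := by
  constructor
  · rintro ⟨h, rfl⟩
    exact ⟨⟨h.1, rfl⟩, h.2⟩
  · rintro ⟨⟨h, rfl⟩, hT⟩
    exact ⟨⟨h, hT⟩, rfl⟩

theorem mem_domD_heredRestrict {F : Type} {R : Rules F} {I : Interp F} {T : Trm F} :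
    T ∈ domD R (heredRestrict R I) ↔ T ∈ domD R I ∧ HeredDom R I T := by
  constructor
  · rintro ⟨hsn, h⟩
    refine ⟨⟨hsn, fun A B hr => ⟨(h A B hr).1.1, fun S hS a ha => ?_⟩⟩,
      .intro (fun A B hr => (h A B hr).1.2) fun A B hr S hS a ha => ?_⟩
    · exact ((h A B hr).2 S (mem_heredRestrict.2 ⟨hS, (h A B hr).1.2⟩) a ha).1
    · exact ((h A B hr).2 S (mem_heredRestrict.2 ⟨hS, (h A B hr).1.2⟩) a ha).2
  · rintro ⟨⟨hsn, h⟩, hT⟩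
    refine ⟨hsn, fun A B hr => ⟨⟨(h A B hr).1, hT.dom_pi hr⟩, fun S hS a ha => ?_⟩⟩
    have hS' := (mem_heredRestrict.1 hS).1
    exact ⟨(h A B hr).2 S hS' a ha, hT.cod_pi hr hS' ha⟩

theorem piPart_heredRestrict {F : Type} {R : Rules F} {I : Interp F} {T A B : Trm F}
    (hT : HeredDom R I T) (hr : RedStar R T (.pi A B)) :
    piPart (heredRestrict R I) A B = piPart I A B := by
  ext t
  constructor
  · intro h S hS a ha S' hS'
    exact h S (mem_heredRestrict.2 ⟨hS, hT.dom_pi hr⟩) a ha S'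
      (mem_heredRestrict.2 ⟨hS', hT.cod_pi hr hS ha⟩)
  · intro h S hS a ha S' hS'
    exact h S (mem_heredRestrict.1 hS).1 a ha S' (mem_heredRestrict.1 hS').1

theorem mem_interpF {F : Type} {R : Rules F} {I : Interp F} {T : Trm F} {S : Set (Trm F)}
    (h : S ∈ interpF R I T) :
    S = SNset R ∨ ∃ A B, RedStar R T (.pi A B) ∧ S = piPart I A B := by
  obtain ⟨_, rfl⟩ := h
  by_cases hp : ∃ A B, RedStar R T (.pi A B) ∧ NormalForm R (.pi A B)
  · refine .inr ⟨hp.choose, hp.choose_spec.choose, hp.choose_spec.choose_spec.1, ?_⟩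
    simp only [interpF, dif_pos hp]
  · left
    simp only [interpF, dif_neg hp]

theorem interpF_heredRestrict {F : Type} {R : Rules F} {I : Interp F} (hI : interpF R I = I) :
    interpF R (heredRestrict R I) = heredRestrict R I := by
  have hdom : ∀ T, (I T).Dom ↔ T ∈ domD R I := fun T => by
    conv_lhs => rw [← hI]
    rfl
  funext T
  refine Part.ext' ?_ ?_
  · exact mem_domD_heredRestrict.trans (and_congr_left fun _ => (hdom T).symm)
  · intro h₁ h₂
    have hget : (I T).get h₂.1 = (interpF R I T).get ((hdom T).1 h₂.1) := by
      simp only [hI]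
    refine Eq.trans ?_ hget.symm
    by_cases hp : ∃ A B, RedStar R T (.pi A B) ∧ NormalForm R (.pi A B)
    · simp only [interpF, dif_pos hp]
      exact piPart_heredRestrict h₂.2 hp.choose_spec.choose_spec.1
    · simp only [interpF, dif_neg hp]

theorem heredDom_of_isLfp {F : Type} {R : Rules F} {I : Interp F}
    (hI : IsLfpInterp (interpF R) I) {T : Trm F} {S : Set (Trm F)} (hS : S ∈ I T) :
    HeredDom R I T :=
  (mem_heredRestrict.1 (hI.2 _ (interpF_heredRestrict hI.1) T S hS)).2

theorem saturated_of_mem_lfp {F : Type} {R : Rules F} (hRS : IsRewriteSystem R) {I : Interp F}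
    (hI : IsLfpInterp (interpF R) I) {T : Trm F} {S : Set (Trm F)} (hS : S ∈ I T) :
    Saturated R S := by
  have hT := heredDom_of_isLfp hI hS
  induction hT generalizing S with
  | @intro T _ _ ihA ihB =>
    have hS' : S ∈ interpF R I T := by rwa [hI.1]
    rcases mem_interpF hS' with rfl | ⟨A, B, hr, rfl⟩
    · exact saturated_SNset hRS
    · have hD : T ∈ domD R I := hS'.1
      obtain ⟨hA, hB⟩ := hD.2 A B hr
      have hgetA : (I A).get hA ∈ I A := ⟨hA, rfl⟩
      have satA := ihA A B hr hgetA
      constructor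
      · intro t ht
        have h0 := satA.2 _ (VarSpine.var 0)
        have hB0 := hB _ hgetA _ h0
        have hmem : (I (Trm.subst1 (.var 0) B)).get hB0 ∈ I (Trm.subst1 (.var 0) B) := ⟨hB0, rfl⟩
        exact SN.of_app ((ihB A B hr _ hgetA _ h0 hmem).1 (ht _ hgetA _ h0 _ hmem))
      · intro t ht S₁ hS₁ a ha S₂ hS₂
        exact (ihB A B hr S₁ hS₁ a ha hS₂).2 _ (.app ht ((ihA A B hr hS₁).1 ha))

theorem saturated_ite_partMem {F : Type} {R : Rules F} (hRS : IsRewriteSystem R) {I : Interp F}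
    (hI : IsLfpInterp (interpF R) I) (T : Trm F) [Decidable (T ∈ domD R I)] :
    Saturated R (if T ∈ domD R I then partMem I T else SNset R) := by
  split_ifs with h
  · have hT : (I T).Dom := by rw [← hI.1]; exact h
    have hmem : (I T).get hT ∈ I T := ⟨hT, rfl⟩
    exact ⟨fun t ht => (saturated_of_mem_lfp hRS hI hmem).1 (ht _ hmem),
      fun t ht S hS => (saturated_of_mem_lfp hRS hI hS).2 t ht⟩
  · exact saturated_SNset hRS

theorem saturated_interp {F : Type} {R : Rules F} (hRS : IsRewriteSystem R) {I : Interp F}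
    (hI : IsLfpInterp (interpF R) I) (T : Trm F) (σ : ℕ → Trm F) :
    Saturated R (interp R I T σ) := by
  classical
  induction T generalizing σ with
  | type => exact saturated_domD hRS I
  | kind => exact saturated_domD hRS I
  | pi A B ihA ihB =>
    rw [interp]
    split_ifs with hk hd
    · refine ⟨fun t ht => ?_, fun t ht a ha => (ihB _).2 _ (.app ht ((ihA σ).1 ha))⟩
      exact SN.of_app ((ihB _).1 (ht _ ((ihA σ).2 _ (.var 0))))
    · simpa [hd] using saturated_ite_partMem hRS hI (Trm.subst σ (.pi A B))
    · exact saturated_SNset hRS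
  | var n => rw [interp]; exact saturated_ite_partMem hRS hI _
  | sym f => rw [interp]; exact saturated_ite_partMem hRS hI _
  | app t u => rw [interp]; exact saturated_ite_partMem hRS hI _
  | lam A b => rw [interp]; exact saturated_ite_partMem hRS hI _

/-- The terms `f t⃗` of `ℂ` have `arit(Θ_f)` strongly normalizing arguments. -/
theorem exists_args_of_mem_CC {F : Type} {R : Rules F} (hRS : IsRewriteSystem R)
    {Θ sΘ : F → Trm F} {I : Interp F} (hI : IsLfpInterp (interpF R) I) {t : Trm F}
    (ht : t ∈ CC R Θ sΘ I) :
    ∃ (f : F) (ts : List (Trm F)), t = Trm.appList (.sym f) ts ∧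
      ts.length = Trm.piArity (Θ f) ∧ ∀ a ∈ ts, SN R a := by
  obtain ⟨f, ts, rfl, hlen, -, -, hmod⟩ := ht
  refine ⟨f, ts, rfl, hlen, fun a ha => ?_⟩
  obtain ⟨i, hi, rfl⟩ := List.getElem_of_mem (List.mem_reverse.2 ha)
  have hi' : i < (Trm.telescope (Θ f)).length := by
    rw [Trm.telescope, Trm.length_teleN_piArity, ← hlen]
    simpa using hi
  have h := hmod i _ (List.getElem?_eq_getElem hi')
  have hs : mkSubst ts.reverse i = ts.reverse[i] := by
    simp only [mkSubst, List.getElem?_eq_getElem hi, Option.getD_some]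
  rw [hs] at h
  exact (saturated_interp hRS hI _ _).1 h

/-! # Size-change matrices -/

theorem SCTe.ext {a b : SCTe} (h₁ : a = .infty ↔ b = .infty)
    (h₂ : a = .minusOne ↔ b = .minusOne) : a = b := by
  cases a <;> cases b <;> simp_all

theorem SCTe.min_eq_infty {a b : SCTe} : a.min b = .infty ↔ a = .infty ∧ b = .infty := by
  cases a <;> cases b <;> simp [SCTe.min]

theorem SCTe.min_eq_minusOne {a b : SCTe} :
    a.min b = .minusOne ↔ a = .minusOne ∨ b = .minusOne := by
  cases a <;> cases b <;> simp [SCTe.min]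

theorem SCTe.comp_eq_infty {a b : SCTe} : a.comp b = .infty ↔ a = .infty ∨ b = .infty := by
  cases a <;> cases b <;> simp [SCTe.comp]

theorem SCTe.comp_eq_minusOne {a b : SCTe} :
    a.comp b = .minusOne ↔
      a ≠ .infty ∧ b ≠ .infty ∧ (a = .minusOne ∨ b = .minusOne) := by
  cases a <;> cases b <;> simp [SCTe.comp]

theorem foldr_min_eq_infty {l : List SCTe} :
    l.foldr SCTe.min .infty = .infty ↔ ∀ a ∈ l, a = .infty := by
  induction l with
  | nil => simp
  | cons a l ih => simp [SCTe.min_eq_infty, ih]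

theorem foldr_min_eq_minusOne {l : List SCTe} :
    l.foldr SCTe.min .infty = .minusOne ↔ .minusOne ∈ l := by
  induction l with
  | nil => simp
  | cons a l ih => rw [List.foldr_cons, SCTe.min_eq_minusOne, ih, List.mem_cons, eq_comm]

theorem matComp_eq_infty {d : ℕ} {M N : ℕ → ℕ → SCTe} {i j : ℕ} :
    matComp d M N i j = .infty ↔ ∀ k < d, M i k = .infty ∨ N k j = .infty := by
  simp [matComp, foldr_min_eq_infty, SCTe.comp_eq_infty]

theorem matComp_eq_minusOne {d : ℕ} {M N : ℕ → ℕ → SCTe} {i j : ℕ} :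
    matComp d M N i j = .minusOne ↔
      ∃ k < d, M i k ≠ .infty ∧ N k j ≠ .infty ∧ (M i k = .minusOne ∨ N k j = .minusOne) := by
  simp [matComp, foldr_min_eq_minusOne, SCTe.comp_eq_minusOne]

theorem matComp_assoc (d e : ℕ) (M N P : ℕ → ℕ → SCTe) :
    matComp e (matComp d M N) P = matComp d M (matComp e N P) := by
  funext i j
  apply SCTe.ext
  · simp only [matComp_eq_infty]
    grind
  · simp only [matComp_eq_minusOne, ne_eq, matComp_eq_infty]
    grind

/-- `M` is a sound description of the size changes between two lists of terms. -/
def SizeChange {F : Type} (R : Rules F) (M : ℕ → ℕ → SCTe) (ts us : List (Trm F)) : Prop :=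
  ∀ i j, M i j ≠ .infty → ∃ a b, ts[i]? = some a ∧ us[j]? = some b ∧
    Relation.ReflTransGen (RedOrArg R) a b ∧
    (M i j = .minusOne → Relation.TransGen (RedOrArg R) a b)

theorem SizeChange.comp {F : Type} {R : Rules F} {M N : ℕ → ℕ → SCTe}
    {ts us vs : List (Trm F)} (hM : SizeChange R M ts us) (hN : SizeChange R N us vs) (d : ℕ) :
    SizeChange R (matComp d M N) ts vs := by
  intro i j hij
  by_cases hneg : matComp d M N i j = .minusOne
  · obtain ⟨k, -, h₁, h₂, h⟩ := matComp_eq_minusOne.1 hneg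
    obtain ⟨a, b, ha, hb, hab, hab'⟩ := hM i k h₁
    obtain ⟨b', c, hb', hc, hbc, hbc'⟩ := hN k j h₂
    obtain rfl : b = b' := by simpa [hb] using hb'
    have hlt : Relation.TransGen (RedOrArg R) a c := by
      rcases h with h | h
      · exact (hab' h).trans_left hbc
      · exact (hbc' h).trans_right hab
    exact ⟨a, c, ha, hc, hab.trans hbc, fun _ => hlt⟩
  · rw [ne_eq, matComp_eq_infty] at hij
    push Not at hij
    obtain ⟨k, -, h₁, h₂⟩ := hij
    obtain ⟨a, b, ha, hb, hab, -⟩ := hM i k h₁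
    obtain ⟨b', c, hb', hc, hbc, -⟩ := hN k j h₂
    obtain rfl : b = b' := by simpa [hb] using hb'
    exact ⟨a, c, ha, hc, hab.trans hbc, fun h => absurd h hneg⟩

theorem sizeChange_dpMatrix {F : Type} {R : Rules F} {ts us ls ms : List (Trm F)}
    {σ : ℕ → Trm F} (hlen : ls.length ≤ ts.length)
    (hts : ∀ (k : ℕ) (tk lk : Trm F), ts[k]? = some tk → ls[k]? = some lk →
      RedStar R tk (Trm.subst σ lk))
    (hus : ∀ (k : ℕ) (mk : Trm F), ms[k]? = some mk → us[k]? = some (Trm.subst σ mk)) :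
    SizeChange R (dpMatrix ls ms) ts us := by
  intro i j hij
  cases hl : ls[i]? with
  | none => simp [dpMatrix, hl] at hij
  | some l =>
    cases hm : ms[j]? with
    | none => simp [dpMatrix, hl, hm] at hij
    | some m =>
      have hi : i < ts.length := (List.getElem?_eq_some_iff.1 hl).1.trans_le hlen
      have hi' := List.getElem?_eq_getElem hi
      have hred := (hts i _ l hi' hl).redOrArg
      simp only [dpMatrix, hl, hm] at hij ⊢
      refine ⟨_, _, hi', hus j m hm, ?_⟩
      by_cases hgt : ArgGT l m
      · have h := (hgt.subst σ).redOrArg R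
        exact ⟨hred.trans h.to_reflTransGen, fun _ => h.trans_right hred⟩
      · by_cases heq : l = m
        · subst heq
          exact ⟨hred, fun h => by simp [hgt] at h⟩
        · simp [hgt, heq] at hij

theorem finite_bounded_matrices (N : ℕ) :
    {M : ℕ → ℕ → SCTe | ∀ i j, M i j ≠ .infty → i < N ∧ j < N}.Finite := by
  have : Finite SCTe :=
    Finite.of_injective (β := Bool × Bool)
      (fun a => (decide (a = .infty), decide (a = .minusOne)))
      (fun a b h => by cases a <;> cases b <;> simp_all)
  refine Set.Finite.of_finite_image
    (f := fun (M : ℕ → ℕ → SCTe) (i j : Fin N) => M i j) (Set.toFinite _) ?_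
  intro M hM M' hM' h
  funext i j
  by_cases hij : i < N ∧ j < N
  · exact congrFun (congrFun h ⟨i, hij.1⟩) ⟨j, hij.2⟩
  · rw [not_imp_comm.1 (hM i j) hij, not_imp_comm.1 (hM' i j) hij]

/-! # Infinite sequences of calls -/

/-- A colouring of the pairs of natural numbers by finitely many colours has a colour `c` and
an infinite set `A` such that every element of `A` is joined by `c` to arbitrarily large
elements of `A`; moreover some triangle is monochromatic of colour `c`. -/
theorem exists_recurrent_colour {κ : Type*} (col : ℕ → ℕ → κ) (K : Set κ) (hK : K.Finite)
    (hcol : ∀ i j, i < j → col i j ∈ K) :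
    ∃ (c : κ) (A : Set ℕ), A.Nonempty ∧ (∀ i ∈ A, ∃ j ∈ A, i < j ∧ col i j = c) ∧
      ∃ i j k, i < j ∧ j < k ∧ col i j = c ∧ col j k = c ∧ col i k = c := by
  have hgt : ∀ i, ∀ᶠ j in (Filter.hyperfilter ℕ : Filter ℕ), i < j := fun i =>
    (Filter.eventually_gt_atTop i).filter_mono Nat.hyperfilter_le_atTop
  have key : ∀ g : ℕ → κ, (∀ᶠ j in (Filter.hyperfilter ℕ : Filter ℕ), g j ∈ K) →
      ∃ c ∈ K, ∀ᶠ j in (Filter.hyperfilter ℕ : Filter ℕ), g j = c := by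
    intro g hg
    obtain ⟨c, hc, he⟩ :=
      Ultrafilter.eq_pure_of_finite_mem (f := (Filter.hyperfilter ℕ).map g) hK hg
    refine ⟨c, hc, ?_⟩
    have : ({c} : Set κ) ∈ (Filter.hyperfilter ℕ).map g := by
      rw [he]
      exact Ultrafilter.mem_pure.2 rfl
    exact this
  choose lim hlimK hlim using fun i => key (col i) ((hgt i).mono fun j => hcol i j)
  obtain ⟨c, -, hc⟩ := key lim (Filter.Eventually.of_forall hlimK)
  have step : ∀ i, lim i = c →
      ∀ᶠ j in (Filter.hyperfilter ℕ : Filter ℕ), i < j ∧ col i j = c := fun i hi =>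
    (hgt i).and (hi ▸ hlim i)
  obtain ⟨i, hi⟩ := hc.exists
  obtain ⟨j, hj, hij⟩ := (hc.and (step i hi)).exists
  obtain ⟨k, hik, hjk⟩ := ((step i hi).and (step j hj)).exists
  refine ⟨c, {i | lim i = c}, ⟨i, hi⟩, fun i hi => (hc.and (step i hi)).exists, ?_⟩
  exact ⟨i, j, k, hij.1, hjk.1, hij.2, hjk.2, hik.2⟩

/-- The product `m i ⬝ m (i + 1) ⬝ … ⬝ m (i + n)` of consecutive matrices, the dimension
between `m k` and `m (k + 1)` being `d (k + 1)`. -/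
def pathProd (d : ℕ → ℕ) (m : ℕ → ℕ → ℕ → SCTe) (i : ℕ) : ℕ → ℕ → ℕ → SCTe
  | 0 => m i
  | n + 1 => matComp (d (i + n + 1)) (pathProd d m i n) (m (i + n + 1))

theorem matComp_pathProd (d : ℕ → ℕ) (m : ℕ → ℕ → ℕ → SCTe) (i n k : ℕ) :
    matComp (d (i + n + 1)) (pathProd d m i n) (pathProd d m (i + n + 1) k) =
      pathProd d m i (n + k + 1) := by
  induction k with
  | zero => rfl
  | succ k ih =>
    rw [pathProd, ← matComp_assoc, ih, show n + (k + 1) + 1 = n + k + 1 + 1 by omega, pathProd.eq_2 d m i (n + k + 1),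
      show i + n + 1 + k + 1 = i + (n + k + 1) + 1 by omega]

theorem tcEdge_pathProd {F : Type} {R : Rules F} {Θ : F → Trm F} {f : ℕ → F}
    {m : ℕ → ℕ → ℕ → SCTe} (h : ∀ n, TCEdge R Θ (f n) (f (n + 1)) (m n)) (i n : ℕ) :
    TCEdge R Θ (f i) (f (i + n + 1)) (pathProd (fun k => Trm.piArity (Θ (f k))) m i n) := by
  induction n with
  | zero => exact h i
  | succ n ih => exact .comp ih (h (i + n + 1))

theorem sizeChange_pathProd {F : Type} {R : Rules F} {ts : ℕ → List (Trm F)} (d : ℕ → ℕ)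
    {m : ℕ → ℕ → ℕ → SCTe} (h : ∀ n, SizeChange R (m n) (ts n) (ts (n + 1))) (i n : ℕ) :
    SizeChange R (pathProd d m i n) (ts i) (ts (i + n + 1)) := by
  induction n with
  | zero => exact h i
  | succ n ih => exact ih.comp (h (i + n + 1)) _

/-- Size-change termination forbids infinite sequences of argument lists that follow the
edges of the call graph. -/
theorem SCT.false_of_sequence {F : Type} [Finite F] {R : Rules F} {Θ : F → Trm F}
    (hsct : SCT R Θ) (f : ℕ → F) (ts : ℕ → List (Trm F)) (m : ℕ → ℕ → ℕ → SCTe)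
    (hlen : ∀ n, (ts n).length = Trm.piArity (Θ (f n))) (hsn : ∀ n, ∀ a ∈ ts n, SN R a)
    (hedge : ∀ n, TCEdge R Θ (f n) (f (n + 1)) (m n))
    (hsize : ∀ n, SizeChange R (m n) (ts n) (ts (n + 1))) : False := by
  obtain ⟨N, hN⟩ : ∃ N, ∀ g, Trm.piArity (Θ g) ≤ N := by
    obtain ⟨N, hN⟩ := (Set.finite_range fun g => Trm.piArity (Θ g)).bddAbove
    exact ⟨N, fun g => hN ⟨g, rfl⟩⟩
  let P : ℕ → ℕ → ℕ → ℕ → SCTe := fun i j =>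
    pathProd (fun k => Trm.piArity (Θ (f k))) m i (j - i - 1)
  have hPedge : ∀ i j, i < j → TCEdge R Θ (f i) (f j) (P i j) := fun i j hij => by
    have h := tcEdge_pathProd hedge i (j - i - 1)
    rwa [show i + (j - i - 1) + 1 = j by omega] at h
  have hPsize : ∀ i j, i < j → SizeChange R (P i j) (ts i) (ts j) := fun i j hij => by
    have h := sizeChange_pathProd (fun k => Trm.piArity (Θ (f k))) hsize i (j - i - 1)
    rwa [show i + (j - i - 1) + 1 = j by omega] at h
  have hPcomp : ∀ i j k, i < j → j < k →
      matComp (Trm.piArity (Θ (f j))) (P i j) (P j k) = P i k := fun i j k hij hjk => by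
    have h := matComp_pathProd (fun k => Trm.piArity (Θ (f k))) m i (j - i - 1) (k - j - 1)
    rwa [show i + (j - i - 1) + 1 = j by omega,
      show j - i - 1 + (k - j - 1) + 1 = k - i - 1 by omega] at h
  obtain ⟨⟨g, g', M⟩, A, ⟨a, ha⟩, hA, i, j, k, hij, hjk, eij, ejk, eik⟩ :=
    exists_recurrent_colour (fun i j => (f i, f j, P i j))
      (Set.univ ×ˢ (Set.univ ×ˢ
        {M : ℕ → ℕ → SCTe | ∀ i j, M i j ≠ .infty → i < N ∧ j < N}))
      (Set.finite_univ.prod (Set.finite_univ.prod (finite_bounded_matrices N)))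
      (fun i j hij => by
        refine ⟨trivial, trivial, fun p q hpq => ?_⟩
        obtain ⟨a, b, ha, hb, -⟩ := hPsize i j hij p q hpq
        have hp := (List.getElem?_eq_some_iff.1 ha).1
        have hq := (List.getElem?_eq_some_iff.1 hb).1
        rw [hlen] at hp hq
        exact ⟨hp.trans_le (hN _), hq.trans_le (hN _)⟩)
  simp only [Prod.mk.injEq] at eij ejk eik hA
  have hidem : matComp (Trm.piArity (Θ g)) M M = M := by
    have h := hPcomp i j k hij hjk
    rwa [eij.2.2, ejk.2.2, eik.2.2, ejk.1] at h
  have hloop : TCEdge R Θ g g M := by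
    have h := hPedge i j hij
    rwa [eij.1, eij.2.2, ejk.1] at h
  obtain ⟨p, -, hp⟩ := hsct g M hloop hidem
  have hdesc : ∀ n ∈ A, ∃ n' ∈ A, ∃ a b, (ts n)[p]? = some a ∧ (ts n')[p]? = some b ∧
      Relation.TransGen (RedOrArg R) a b := fun n hn => by
    obtain ⟨n', hn', hlt, -, -, hP⟩ := hA n hn
    obtain ⟨a, b, ha, hb, -, h⟩ := hPsize n n' hlt p p (by simp [hP, hp])
    exact ⟨n', hn', a, b, ha, hb, h (by rw [hP, hp])⟩
  have hacc : ∀ x, Acc (fun a b => Relation.TransGen (RedOrArg R) b a) x →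
      ∀ n ∈ A, (ts n)[p]? ≠ some x := by
    intro x hx
    induction hx with
    | intro x _ ih =>
      intro n hn hnx
      obtain ⟨n', hn', a, b, ha, hb, hab⟩ := hdesc n hn
      obtain rfl : x = a := by simpa [hnx] using ha
      exact ih b hab n' hn' hb
  obtain ⟨-, -, x, -, hx, -⟩ := hdesc a ha
  have hxacc := (hsn a x (List.mem_of_getElem? hx)).acc_redOrArg.transGen
  refine hacc x (Subrelation.accessible (fun {u v} h => ?_) hxacc) a ha hx
  exact Relation.transGen_swap.1 h

theorem List.Forall₂.trans_of_trans {α : Type*} {r : α → α → Prop}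
    (hr : ∀ a b c, r a b → r b c → r a c) {as bs cs : List α} (h₁ : List.Forall₂ r as bs)
    (h₂ : List.Forall₂ r bs cs) : List.Forall₂ r as cs := by
  induction h₁ generalizing cs with
  | nil => exact h₂
  | cons hab _ ih =>
    cases h₂ with | cons hbc h₂ => exact .cons (hr _ _ _ hab hbc) (ih h₂)

theorem argRed_star_appList {F : Type} {R : Rules F} {f : F} {ts : List (Trm F)} {v : Trm F}
    (h : Relation.ReflTransGen (ArgRed R) (Trm.appList (.sym f) ts) v) :
    ∃ vs, v = Trm.appList (.sym f) vs ∧ List.Forall₂ (RedStar R) ts vs := by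
  induction h with
  | refl => exact ⟨ts, rfl, List.forall₂_same.2 fun _ _ => .refl⟩
  | tail _ hr ih =>
    obtain ⟨vs, rfl, hvs⟩ := ih
    obtain ⟨g, pre, post, a, b, hab, e, rfl⟩ := hr
    obtain ⟨rfl, rfl⟩ := Trm.appList_sym_inj e
    refine ⟨_, rfl, ?_⟩
    have hstep : List.Forall₂ (RedStar R) (pre ++ a :: post) (pre ++ b :: post) :=
      List.rel_append (List.forall₂_same.2 fun _ _ => .refl)
        (.cons (.single hab) (List.forall₂_same.2 fun _ _ => .refl))
    exact hvs.trans_of_trans (fun _ _ _ => Relation.ReflTransGen.trans) hstep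

theorem CallRel.exists_dpMatrix {F : Type} {R : Rules F} {Θ sΘ : F → Trm F} {I : Interp F}
    {f g : F} {ts us : List (Trm F)}
    (h : CallRel R Θ sΘ I (Trm.appList (.sym f) ts) (Trm.appList (.sym g) us)) :
    ∃ M, TCEdge R Θ f g M ∧ SizeChange R M ts us := by
  obtain ⟨-, -, v, hv, f', g', vs', us', ls, ms, σ, rfl, eu, hdp, hll, -, hl, hm⟩ := h
  obtain ⟨vs, e, hvs⟩ := argRed_star_appList hv
  obtain ⟨rfl, rfl⟩ := Trm.appList_sym_inj e
  obtain ⟨rfl, rfl⟩ := Trm.appList_sym_inj eu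
  refine ⟨_, .base hdp, sizeChange_dpMatrix (σ := σ) (hvs.length_eq ▸ hll) ?_ hm⟩
  intro k tk lk htk hlk
  obtain ⟨hk, rfl⟩ := List.getElem?_eq_some_iff.1 htk
  have hk' : k < vs'.length := hvs.length_eq ▸ hk
  exact (hvs.get hk hk').trans (hl k _ lk (List.getElem?_eq_getElem hk') hlk)

/-- Lemma 16 of the paper. If the set `F` of function symbols is finite
and `R` is size-change terminating, then the call relation `≻̃` terminates on `ℂ`. -/
theorem sct_call_terminates {F : Type} [Finite F] (R : Rules F) (Θ sΘ : F → Trm F)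
    (hRS : IsRewriteSystem R)
    (calI : Interp F) (hlfp : IsLfpInterp (interpF R) calI)
    (hsct : SCT R Θ) :
    WellFounded (fun u t => CallRel R Θ sΘ calI t u) := by
  rw [wellFounded_iff_isEmpty_descending_chain]
  refine ⟨fun ⟨t, ht⟩ => ?_⟩
  choose f ts hts hlen hsn using fun n => exists_args_of_mem_CC hRS hlfp (ht n).1
  simp only [hts] at ht
  choose m hedge hsize using fun n => (ht n).exists_dpMatrix
  exact hsct.false_of_sequence f ts m hlen hsn hedge hsize
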